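/- (Shutdown alignment implies weak shutdown instructability.) In a finite shutdown scenario with a deterministic agent decision D₂ = π₂ ∘ PaD₂, suppose the policy is shutdown aligned and satisfies: (a) no indiscriminate shutdown, P(S = false) ≠ 1; (b) D₂ determines shutdown, P({ω : D₂(ω) = S(ω)}) = 1; (c) uncertainty: if P({ω : ω is not vigilant} ∪ {ω : H(ω) = false}) > 0, then for every o₂ with P(PaD₂ = o₂) > 0 one has P({ω : E[U | PaH = PaH(ω)] < E[U₀ | PaH = PaH(ω)]} | PaD₂ = o₂) > 0; and (d) caution, E[U₀] ≥ 0. Then the policy ensures vigilance and is obedient on distribution (and hence, with (d), is weakly shutdown instructable). -/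

import Mathlib

open Finset

attribute [local instance] Classical.propDecidable

/-- Expectation of `X` under the finite probability mass function `P`. -/
noncomputable def pexp {Ω : Type} [Fintype Ω] (P X : Ω → ℝ) : ℝ := ∑ ω, P ω * X ω

/-- Probability of the event `A` under `P`. -/
noncomputable def pr {Ω : Type} [Fintype Ω] (P : Ω → ℝ) (A : Ω → Prop) : ℝ :=
  ∑ ω, if A ω then P ω else 0

/-- Conditional expectation `E[X | A]` under `P`. -/
noncomputable def cexp {Ω : Type} [Fintype Ω] (P X : Ω → ℝ) (A : Ω → Prop) : ℝ :=
  (∑ ω, if A ω then P ω * X ω else 0) / pr P A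

/-- Conditional probability `P(A | B)`. -/
noncomputable def cpr {Ω : Type} [Fintype Ω] (P : Ω → ℝ) (A B : Ω → Prop) : ℝ :=
  pr P (fun ω => A ω ∧ B ω) / pr P B

/-- `ω` is vigilant w.r.t. `(PaH, H, U, U₀)`: if shutting down is conditionally
preferable given the human's information, the human requests shutdown (`H ω = false`). -/
def Vigilant {Ω O : Type} [Fintype Ω] (P : Ω → ℝ) (PaH : Ω → O)
    (H : Ω → Bool) (U U₀ : Ω → ℝ) (ω : Ω) : Prop :=
  cexp P U (fun ω' => PaH ω' = PaH ω) < cexp P U₀ (fun ω' => PaH ω' = PaH ω) → H ω = false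

/-!
If a non-vigilant point or a shutdown request were possible, uncertainty would place, in every
possible information state of the agent, a possible point at which shutdown is preferable. Alignment
makes the system shut down there, and since the agent's decision depends only on its information, it
shuts down throughout that state. So it would shut down almost surely, contrary to (a). Hence
almost surely the human is vigilant and requests no shutdown, which makes obedience automatic.
-/

section FiniteProbability

variable {Ω : Type} [Fintype Ω] {P : Ω → ℝ} {A B : Ω → Prop}

theorem pr_nonneg (hP0 : ∀ ω, 0 ≤ P ω) : 0 ≤ pr P A :=
  sum_nonneg fun ω _ => ite_nonneg (hP0 ω) le_rfl

theorem pr_eq_zero_iff (hP0 : ∀ ω, 0 ≤ P ω) : pr P A = 0 ↔ ∀ ω, 0 < P ω → ¬ A ω := by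
  have pointwise (ω : Ω) : (if A ω then P ω else 0) = 0 ↔ (0 < P ω → ¬ A ω) := by
    rw [(hP0 ω).lt_iff_ne', ite_eq_right_iff]
    tauto
  simp only [pr, sum_eq_zero_iff_of_nonneg fun ω _ => ite_nonneg (hP0 ω) le_rfl, mem_univ,
    true_imp_iff, pointwise]

theorem pr_pos_iff (hP0 : ∀ ω, 0 ≤ P ω) : 0 < pr P A ↔ ∃ ω, 0 < P ω ∧ A ω := by
  rw [(pr_nonneg hP0).lt_iff_ne', Ne, pr_eq_zero_iff hP0]
  push Not
  rfl

theorem pr_and_add_pr_not_and (P : Ω → ℝ) (A B : Ω → Prop) :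
    pr P (fun ω => A ω ∧ B ω) + pr P (fun ω => ¬ A ω ∧ B ω) = pr P B := by
  simp only [pr, ← sum_add_distrib]
  refine sum_congr rfl fun ω _ => ?_
  by_cases hA : A ω <;> simp [hA]

theorem pr_and_eq_right_iff (hP0 : ∀ ω, 0 ≤ P ω) :
    pr P (fun ω => A ω ∧ B ω) = pr P B ↔ ∀ ω, 0 < P ω → B ω → A ω := by
  rw [← pr_and_add_pr_not_and P A B, left_eq_add, pr_eq_zero_iff hP0]
  exact forall₂_congr fun _ _ => by tauto

theorem pr_eq_one_iff (hP0 : ∀ ω, 0 ≤ P ω) (hP1 : ∑ ω, P ω = 1) :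
    pr P A = 1 ↔ ∀ ω, 0 < P ω → A ω := by
  have pr_true : pr P (fun _ => True) = 1 := by simpa only [pr, if_true] using hP1
  simpa only [and_true, true_imp_iff, pr_true] using
    pr_and_eq_right_iff (A := A) (B := fun _ => True) hP0

theorem cpr_eq_one_iff (hP0 : ∀ ω, 0 ≤ P ω) (hB : 0 < pr P B) :
    cpr P A B = 1 ↔ ∀ ω, 0 < P ω → B ω → A ω := by
  rw [cpr, div_eq_one_iff_eq hB.ne', pr_and_eq_right_iff hP0]

theorem exists_of_cpr_pos (hP0 : ∀ ω, 0 ≤ P ω) (h : 0 < cpr P A B) :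
    ∃ ω, 0 < P ω ∧ A ω ∧ B ω :=
  (pr_pos_iff hP0).1 <| lt_of_not_ge fun hle =>
    h.not_ge (div_nonpos_of_nonpos_of_nonneg hle (pr_nonneg hP0))

theorem pr_fiber_pos {α : Type*} (hP0 : ∀ ω, 0 ≤ P ω) (X : Ω → α) {ω : Ω} (hω : 0 < P ω) :
    0 < pr P (fun ω' => X ω' = X ω) :=
  (pr_pos_iff hP0).2 ⟨ω, hω, rfl⟩

theorem eq_const_of_factors_of_cpr_pos {α β : Type*} {X : Ω → α} {f : α → β} {Y : Ω → β} {b : β}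
    (hP0 : ∀ ω, 0 ≤ P ω) (hfactors : ∀ ω, 0 < P ω → f (X ω) = Y ω)
    (hconst : ∀ ω, 0 < P ω → A ω → Y ω = b)
    (hmeets : ∀ x, 0 < pr P (fun ω => X ω = x) → 0 < cpr P A (fun ω => X ω = x)) :
    ∀ ω, 0 < P ω → Y ω = b := by
  intro ω hω
  obtain ⟨ω', hω', hA, hX⟩ := exists_of_cpr_pos hP0 (hmeets (X ω) (pr_fiber_pos hP0 X hω))
  calc
    Y ω = f (X ω) := (hfactors ω hω).symm
    _ = f (X ω') := by rw [hX]
    _ = Y ω' := hfactors ω' hω'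
    _ = b := hconst ω' hω' hA

end FiniteProbability

section Shutdown

variable {Ω O : Type} [Fintype Ω] {P : Ω → ℝ} {PaH : Ω → O} {H S : Ω → Bool} {U U₀ : Ω → ℝ}

/-- Given the human's information at `ω`, enforced shutdown has the larger conditional expected
utility: the premise of vigilance at `ω` and the event in the uncertainty condition. -/
def ShutdownPreferred (P : Ω → ℝ) (PaH : Ω → O) (U U₀ : Ω → ℝ) (ω : Ω) : Prop :=
  cexp P U (fun ω' => PaH ω' = PaH ω) < cexp P U₀ (fun ω' => PaH ω' = PaH ω)

/-- Shutdown alignment: the system shuts down almost surely given any possible human information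
on which shutdown is preferable. Information values of probability zero are excluded, since there
`cexp` and `cpr` are quotients by zero. -/
def ShutdownAligned (P : Ω → ℝ) (PaH : Ω → O) (S : Ω → Bool) (U U₀ : Ω → ℝ) : Prop :=
  ∀ o : O, 0 < pr P (fun ω => PaH ω = o) →
    cexp P U (fun ω => PaH ω = o) < cexp P U₀ (fun ω => PaH ω = o) →
    cpr P (fun ω => S ω = false) (fun ω => PaH ω = o) = 1

theorem ShutdownAligned.eq_false_of_shutdownPreferred (haligned : ShutdownAligned P PaH S U U₀)
    (hP0 : ∀ ω, 0 ≤ P ω) {ω : Ω} (hω : 0 < P ω) (hpref : ShutdownPreferred P PaH U U₀ ω) :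
    S ω = false :=
  have hpos := pr_fiber_pos hP0 PaH hω
  (cpr_eq_one_iff hP0 hpos).1 (haligned (PaH ω) hpos hpref) ω hω rfl

theorem stmt5_general {O₂ : Type*} (PaD₂ : Ω → O₂) (π₂ : O₂ → Bool)
    (hP0 : ∀ ω, 0 ≤ P ω) (hP1 : ∑ ω, P ω = 1) (haligned : ShutdownAligned P PaH S U U₀)
    (hNoIndiscriminate : pr P (fun ω => S ω = false) ≠ 1)
    (hDetermines : pr P (fun ω => π₂ (PaD₂ ω) = S ω) = 1)
    (hUncertainty :
      0 < pr P (fun ω => ¬ Vigilant P PaH H U U₀ ω ∨ H ω = false) →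
      ∀ o₂ : O₂, 0 < pr P (fun ω => PaD₂ ω = o₂) →
        0 < cpr P (ShutdownPreferred P PaH U U₀) (fun ω => PaD₂ ω = o₂)) :
    ∀ ω, 0 < P ω → Vigilant P PaH H U U₀ ω ∧ H ω ≠ false := by
  suffices hnull : pr P (fun ω => ¬ Vigilant P PaH H U U₀ ω ∨ H ω = false) = 0 by
    simpa only [not_or, not_not] using (pr_eq_zero_iff hP0).1 hnull
  by_contra hne
  have hmeets := hUncertainty ((pr_nonneg hP0).lt_of_ne' hne)
  have hshutdown : ∀ ω, 0 < P ω → S ω = false :=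
    eq_const_of_factors_of_cpr_pos hP0 ((pr_eq_one_iff hP0 hP1).1 hDetermines)
      (fun _ => haligned.eq_false_of_shutdownPreferred hP0) hmeets
  exact hNoIndiscriminate ((pr_eq_one_iff hP0 hP1).2 hshutdown)

end Shutdown

/-- Shutdown alignment implies weak shutdown instructability:
with a deterministic decision D₂ = π₂ ∘ PaD₂, a shutdown aligned policy satisfying
(a) no indiscriminate shutdown, (b) D₂ determines shutdown, (c) uncertainty and
(d) caution, ensures vigilance and is obedient on distribution. -/
theorem stmt5 {Ω O O₂ : Type} [Fintype Ω] [Fintype O] [Fintype O₂]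
    (P : Ω → ℝ) (hP0 : ∀ ω, 0 ≤ P ω) (hP1 : ∑ ω, P ω = 1)
    (PaH : Ω → O) (H S : Ω → Bool) (U U₀ : Ω → ℝ)
    (PaD₂ : Ω → O₂) (π₂ : O₂ → Bool) (D₂ : Ω → Bool)
    (hD₂ : ∀ ω, D₂ ω = π₂ (PaD₂ ω))
    (haligned : ∀ o : O, 0 < pr P (fun ω => PaH ω = o) →
      cexp P U (fun ω => PaH ω = o) < cexp P U₀ (fun ω => PaH ω = o) →
      cpr P (fun ω => S ω = false) (fun ω => PaH ω = o) = 1)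
    (hNoIndiscriminate : pr P (fun ω => S ω = false) ≠ 1)
    (hDetermines : pr P (fun ω => D₂ ω = S ω) = 1)
    (hUncertainty :
      0 < pr P (fun ω => ¬ Vigilant P PaH H U U₀ ω ∨ H ω = false) →
      ∀ o₂ : O₂, 0 < pr P (fun ω => PaD₂ ω = o₂) →
        0 < cpr P
          (fun ω => cexp P U (fun ω' => PaH ω' = PaH ω) <
            cexp P U₀ (fun ω' => PaH ω' = PaH ω))
          (fun ω => PaD₂ ω = o₂))
    (hcautious : pexp P U₀ ≥ 0) :
    (∀ ω, 0 < P ω → Vigilant P PaH H U U₀ ω) ∧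
    pr P (fun ω => H ω = false ∧ S ω ≠ false) = 0 := by
  obtain rfl : D₂ = π₂ ∘ PaD₂ := funext hD₂
  have h := stmt5_general PaD₂ π₂ hP0 hP1 haligned hNoIndiscriminate hDetermines hUncertainty
  exact ⟨fun ω hω => (h ω hω).1, (pr_eq_zero_iff hP0).2 fun ω hω hbad => (h ω hω).2 hbad.1⟩
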